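/- For nonzero integers s, t and odd positive integer q with gcd(s,q)=1, the quadratic Gauss sum G(s,t;q) = Σ_{b mod q} e((s b² + t b)/q) equals ε_q √q (s/q) e(−(4s)^{-1} t²/q), where (s/q) is the Jacobi symbol, ε_q = 1 if q ≡ 1 mod 4 and ε_q = i if q ≡ 3 mod 4, and (4s)^{-1} denotes the inverse of 4s modulo q. -/

import Mathlib

open Finset

/-- `e(x) = exp(2πi x)`. -/
noncomputable def e (x : ℝ) : ℂ := Complex.exp (2 * Real.pi * Complex.I * x)

open ZMod

/-- The Gaussian binomial coefficient `[k + d choose k]` at `r`, indexed by `k` and `d`. -/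
def gaussBinom {R : Type*} [CommRing R] (r : R) : ℕ → ℕ → R
  | 0, _ => 1
  | _ + 1, 0 => 1
  | k + 1, d + 1 => gaussBinom r k (d + 1) + r ^ (k + 1) * gaussBinom r (k + 1) d

section GaussBinom

variable {R : Type*} [CommRing R] (r : R)

@[simp] lemma gaussBinom_zero_left (d : ℕ) : gaussBinom r 0 d = 1 := by
  simp [gaussBinom]

@[simp] lemma gaussBinom_zero_right (k : ℕ) : gaussBinom r k 0 = 1 := by
  cases k <;> simp [gaussBinom]

lemma gaussBinom_succ_succ (k d : ℕ) :
    gaussBinom r (k + 1) (d + 1) =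
      gaussBinom r k (d + 1) + r ^ (k + 1) * gaussBinom r (k + 1) d := by
  simp [gaussBinom]

lemma one_sub_pow_mul_gaussBinom_aux (k : ℕ)
    (h : ∀ d, (1 - r ^ (d + 1)) * gaussBinom r k (d + 1) =
      (1 - r ^ (k + d + 1)) * gaussBinom r k d) (d : ℕ) :
    (1 - r ^ (k + 1)) * gaussBinom r (k + 1) d = (1 - r ^ (k + d + 1)) * gaussBinom r k d := by
  induction d with
  | zero => simp
  | succ d ih =>
    rw [gaussBinom_succ_succ]
    linear_combination r ^ (k + 1) * ih - r ^ (k + 1) * h d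

lemma one_sub_pow_mul_gaussBinom_succ_right (k d : ℕ) :
    (1 - r ^ (d + 1)) * gaussBinom r k (d + 1) = (1 - r ^ (k + d + 1)) * gaussBinom r k d := by
  induction k generalizing d with
  | zero => simp
  | succ k ih =>
    have h := one_sub_pow_mul_gaussBinom_aux r k ih
    cases d with
    | zero =>
      have := ih 0
      simp only [gaussBinom_succ_succ, gaussBinom_zero_right] at this ⊢
      linear_combination this
    | succ d =>
      rw [gaussBinom_succ_succ r k (d + 1)]
      linear_combination ih (d + 1) - h (d + 1)

lemma one_sub_pow_mul_gaussBinom_succ_left (k d : ℕ) :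
    (1 - r ^ (k + 1)) * gaussBinom r (k + 1) d = (1 - r ^ (k + d + 1)) * gaussBinom r k d :=
  one_sub_pow_mul_gaussBinom_aux r k (one_sub_pow_mul_gaussBinom_succ_right r k) d

lemma sum_neg_one_pow_mul_gaussBinom_add_two (m : ℕ) :
    ∑ p ∈ antidiagonal (m + 2), (-1) ^ p.1 * gaussBinom r p.1 p.2 =
      (1 - r ^ (m + 1)) * ∑ p ∈ antidiagonal m, (-1) ^ p.1 * gaussBinom r p.1 p.2 := by
  have h1 := Finset.Nat.sum_antidiagonal_succ (n := m)
    (f := fun p : ℕ × ℕ ↦ (-1) ^ p.1 * gaussBinom r p.1 p.2)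
  have h2 := Finset.Nat.sum_antidiagonal_succ' (n := m)
    (f := fun p : ℕ × ℕ ↦ (-1) ^ p.1 * gaussBinom r p.1 p.2)
  rw [h1] at h2
  rw [Finset.Nat.sum_antidiagonal_succ, Finset.Nat.sum_antidiagonal_succ']
  have h3 : ∑ p ∈ antidiagonal m, (-1) ^ (p.1 + 1) * gaussBinom r (p.1 + 1) (p.2 + 1) =
      -∑ p ∈ antidiagonal m, (-1) ^ p.1 * gaussBinom r p.1 (p.2 + 1) +
      ∑ p ∈ antidiagonal m, (-1) ^ (p.1 + 1) * gaussBinom r (p.1 + 1) p.2 +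
      (1 - r ^ (m + 1)) * ∑ p ∈ antidiagonal m, (-1) ^ p.1 * gaussBinom r p.1 p.2 := by
    rw [mul_sum, ← sum_neg_distrib, ← sum_add_distrib, ← sum_add_distrib]
    refine sum_congr rfl fun p hp ↦ ?_
    have := one_sub_pow_mul_gaussBinom_succ_left r p.1 p.2
    rw [mem_antidiagonal.mp hp] at this
    rw [gaussBinom_succ_succ]
    linear_combination (-1) ^ p.1 * this
  simp only [gaussBinom_zero_left, gaussBinom_zero_right] at *
  rw [h3]
  linear_combination h2

/-- Gauss's product formula for the alternating sum of Gaussian binomial coefficients. -/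
lemma sum_neg_one_pow_mul_gaussBinom (m : ℕ) :
    ∑ p ∈ antidiagonal (2 * m), (-1) ^ p.1 * gaussBinom r p.1 p.2 =
      ∏ j ∈ range m, (1 - r ^ (2 * j + 1)) := by
  induction m with
  | zero => simp
  | succ m ih =>
    rw [mul_add_one, sum_neg_one_pow_mul_gaussBinom_add_two, ih, prod_range_succ, mul_comm]

end GaussBinom

/-- The quadratic Gauss sum `∑ x, ψ (a x²)` for the standard additive character `ψ` of `ZMod n`. -/
noncomputable def quadGauss (n : ℕ) [NeZero n] (a : ZMod n) : ℂ :=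
  ∑ x : ZMod n, stdAddChar (a * x ^ 2)

lemma sum_range_natCast_zmod (n : ℕ) [NeZero n] (f : ZMod n → ℂ) :
    ∑ b ∈ range n, f b = ∑ x : ZMod n, f x := by
  refine sum_nbij' (fun b ↦ (b : ZMod n)) ZMod.val (by simp)
    (fun x _ ↦ mem_range.mpr (ZMod.val_lt x)) ?_ (by simp) (by simp)
  intro b hb
  exact ZMod.val_cast_of_lt (mem_range.mp hb)

lemma sum_stdAddChar_quadratic (n : ℕ) [NeZero n] (s t u : ZMod n) (hu : 4 * s * u = 1) :
    ∑ x : ZMod n, stdAddChar (s * x ^ 2 + t * x) =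
      quadGauss n s * (stdAddChar (-(u * t ^ 2)) : ℂ) := by
  rw [quadGauss, sum_mul, ← Equiv.sum_comp (Equiv.subRight (2 * u * t))]
  refine sum_congr rfl fun x _ ↦ ?_
  rw [← AddChar.map_add_eq_mul, Equiv.subRight_apply]
  congr 1
  linear_combination (u * t ^ 2 - t * x) * hu

lemma gaussBinom_stdAddChar {n : ℕ} [NeZero n] (hn : Odd n) (k d : ℕ) (h : k + d + 1 = n) :
    gaussBinom (stdAddChar (-2 : ZMod n)) k d =
      (-1) ^ k * (stdAddChar ((k * (k + 1) : ℕ) : ZMod n) : ℂ) := by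
  induction k generalizing d with
  | zero => simp
  | succ k ih =>
    have h1 := one_sub_pow_mul_gaussBinom_succ_left (stdAddChar (-2 : ZMod n) : ℂ) k d
    have h2 := one_sub_pow_mul_gaussBinom_succ_right (stdAddChar (-2 : ZMod n) : ℂ) k d
    rw [ih (d + 1) (by omega), ← h1] at h2
    have hz : ((k + d + 2 : ℕ) : ZMod n) = 0 := by
      rw [show k + d + 2 = n by omega, ZMod.natCast_self]
    push_cast at hz
    have hd : (stdAddChar (-2 : ZMod n) : ℂ) ^ (d + 1) = stdAddChar (2 * ((k : ZMod n) + 1)) := by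
      rw [← AddChar.map_nsmul_eq_pow, nsmul_eq_mul]
      congr 1
      push_cast
      linear_combination -2 * hz
    have hk : (stdAddChar (-2 : ZMod n) : ℂ) ^ (k + 1) =
        stdAddChar (-(2 * ((k : ZMod n) + 1))) := by
      rw [← AddChar.map_nsmul_eq_pow, nsmul_eq_mul]
      congr 1
      push_cast
      ring
    have hne : 1 - (stdAddChar (-2 : ZMod n) : ℂ) ^ (k + 1) ≠ 0 := by
      rw [hk, sub_ne_zero, ← AddChar.map_zero_eq_one (stdAddChar (N := n)), Ne,
        injective_stdAddChar.eq_iff, eq_comm, neg_eq_zero]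
      intro h0
      have : ((2 * (k + 1) : ℕ) : ZMod n) = 0 := by exact_mod_cast h0
      rw [ZMod.natCast_eq_zero_iff, hn.coprime_two_right.dvd_mul_left] at this
      have := Nat.le_of_dvd (by omega) this
      omega
    apply mul_left_cancel₀ hne
    rw [← h2, hd, hk]
    have e1 : (stdAddChar (((k + 1) * (k + 1 + 1) : ℕ) : ZMod n) : ℂ) =
        stdAddChar ((k * (k + 1) : ℕ) : ZMod n) * stdAddChar (2 * ((k : ZMod n) + 1)) := by
      rw [← AddChar.map_add_eq_mul]
      congr 1
      push_cast
      ring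
    have e2 : (stdAddChar (-(2 * ((k : ZMod n) + 1))) : ℂ) * stdAddChar (2 * ((k : ZMod n) + 1))
        = 1 := by
      rw [← AddChar.map_add_eq_mul, neg_add_cancel, AddChar.map_zero_eq_one]
    rw [e1, pow_succ]
    generalize (stdAddChar ((k * (k + 1) : ℕ) : ZMod n) : ℂ) = A
    linear_combination -(-1) ^ k * A * e2

lemma prod_stdAddChar_neg_odd (n : ℕ) [NeZero n] (m : ℕ) :
    ∏ j ∈ range m, (stdAddChar (-((2 * j + 1 : ℕ) : ZMod n)) : ℂ) =
      stdAddChar (-((m : ZMod n) ^ 2)) := by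
  induction m with
  | zero => simp
  | succ m ih =>
    rw [prod_range_succ, ih, ← AddChar.map_add_eq_mul]
    congr 1
    push_cast
    ring

lemma one_sub_stdAddChar (n : ℕ) [NeZero n] (c : ℕ) :
    1 - (stdAddChar (-2 : ZMod n) : ℂ) ^ c =
      stdAddChar (-(c : ZMod n)) * (2 * Complex.I * Real.sin (2 * Real.pi * c / n)) := by
  have h1 : (stdAddChar (-2 : ZMod n) : ℂ) ^ c =
      stdAddChar (-(c : ZMod n)) * stdAddChar (-(c : ZMod n)) := by
    rw [← AddChar.map_add_eq_mul, ← AddChar.map_nsmul_eq_pow, nsmul_eq_mul]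
    congr 1
    ring
  have h2 : (1 : ℂ) = stdAddChar (-(c : ZMod n)) * stdAddChar (c : ZMod n) := by
    rw [← AddChar.map_add_eq_mul, neg_add_cancel, AddChar.map_zero_eq_one]
  have h3 := stdAddChar_coe (N := n) c
  have h4 := stdAddChar_coe (N := n) (-c)
  push_cast at h3 h4
  rw [h1]
  nth_rewrite 1 [h2]
  rw [← mul_sub]
  congr 1
  rw [h3, h4]
  push_cast
  rw [Complex.sin]
  ring_nf
  simp
  ring

lemma quadGauss_one_eq_prod (m : ℕ) :
    quadGauss (2 * m + 1) 1 =
      ∏ j ∈ range m, (2 * Complex.I *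
        Real.sin (2 * Real.pi * (2 * j + 1 : ℕ) / (2 * m + 1 : ℕ))) := by
  set n := 2 * m + 1 with hn
  have hz : (2 * (m : ZMod n) + 1) = 0 := by
    have := ZMod.natCast_self n
    rw [hn] at this
    push_cast at this
    exact this
  have key := sum_neg_one_pow_mul_gaussBinom (stdAddChar (-2 : ZMod n) : ℂ) m
  have hl : ∑ p ∈ antidiagonal (2 * m),
      (-1) ^ p.1 * gaussBinom (stdAddChar (-2 : ZMod n) : ℂ) p.1 p.2 =
      ∑ b ∈ range n, (stdAddChar (1 * (b : ZMod n) ^ 2 + 1 * (b : ZMod n)) : ℂ) := by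
    rw [Finset.Nat.sum_antidiagonal_eq_sum_range_succ_mk]
    refine sum_congr rfl fun k hk ↦ ?_
    have := mem_range.mp hk
    rw [gaussBinom_stdAddChar ⟨m, rfl⟩ _ _ (by omega), ← mul_assoc, ← mul_pow]
    rw [neg_one_mul, neg_neg, one_pow, one_mul]
    congr 1
    push_cast
    ring
  have hs := sum_stdAddChar_quadratic n 1 1 (((m : ZMod n) + 1) ^ 2)
    (by linear_combination (2 * (m : ZMod n) + 3) * hz)
  rw [hl, sum_range_natCast_zmod n fun x ↦ (stdAddChar (1 * x ^ 2 + 1 * x) : ℂ), hs] at key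
  have hr : ∏ j ∈ range m, (1 - (stdAddChar (-2 : ZMod n) : ℂ) ^ (2 * j + 1)) =
      stdAddChar (-((m : ZMod n) ^ 2)) * ∏ j ∈ range m, (2 * Complex.I *
        Real.sin (2 * Real.pi * (2 * j + 1 : ℕ) / n)) := by
    rw [← prod_stdAddChar_neg_odd, ← prod_mul_distrib]
    exact prod_congr rfl fun j _ ↦ one_sub_stdAddChar n (2 * j + 1)
  have hm : -(((m : ZMod n) + 1) ^ 2 * 1 ^ 2) = -((m : ZMod n) ^ 2) := by
    linear_combination -hz
  rw [hr, hm, mul_comm] at key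
  refine mul_left_cancel₀ (fun h0 ↦ ?_) key
  have : (stdAddChar (-((m : ZMod n) ^ 2)) : ℂ) * stdAddChar ((m : ZMod n) ^ 2) = 1 := by
    rw [← AddChar.map_add_eq_mul, neg_add_cancel, AddChar.map_zero_eq_one]
  rw [h0, zero_mul] at this
  exact zero_ne_one this

open ComplexConjugate in
lemma conj_quadGauss (n : ℕ) [NeZero n] (a : ZMod n) :
    conj (quadGauss n a) = quadGauss n (-a) := by
  rw [quadGauss, quadGauss, map_sum]
  refine sum_congr rfl fun x _ ↦ ?_
  rw [← AddChar.map_neg_eq_conj, neg_mul]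

open ComplexConjugate in
lemma quadGauss_one_mul_conj (n : ℕ) [NeZero n] (hn : Odd n) :
    quadGauss n 1 * conj (quadGauss n 1) = n := by
  have h2 : IsUnit (2 : ZMod n) := by
    have := (ZMod.isUnit_iff_coprime 2 n).mpr hn.coprime_two_left
    exact_mod_cast this
  rw [conj_quadGauss, mul_comm, quadGauss, quadGauss, sum_mul_sum]
  have h (y : ZMod n) : ∑ x : ZMod n, (stdAddChar (-1 * y ^ 2) * stdAddChar (1 * x ^ 2) : ℂ) =
      ∑ d : ZMod n, (stdAddChar (d ^ 2) * stdAddChar (y * (2 * d)) : ℂ) := by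
    rw [← Equiv.sum_comp (Equiv.addRight y)]
    refine sum_congr rfl fun d _ ↦ ?_
    rw [← AddChar.map_add_eq_mul, ← AddChar.map_add_eq_mul, Equiv.coe_addRight]
    congr 1
    ring
  rw [sum_congr rfl fun y _ ↦ h y, sum_comm]
  simp_rw [← mul_sum, AddChar.sum_mulShift _ (isPrimitive_stdAddChar n), h2.mul_right_eq_zero]
  simp

/-- The normalising factor `ε_n` of the quadratic Gauss sum. -/
noncomputable def gaussEps (n : ℕ) : ℂ := if n % 4 = 1 then 1 else Complex.I

lemma quadGauss_one_sign (m : ℕ) :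
    ∃ P : ℝ, 0 ≤ P ∧ quadGauss (2 * m + 1) 1 = gaussEps (2 * m + 1) * P := by
  set n := 2 * m + 1 with hn
  let f : ℕ → ℝ := fun j ↦ 2 * Real.sin (2 * Real.pi * (2 * j + 1 : ℕ) / n)
  have hG : quadGauss n 1 = Complex.I ^ m * ((∏ j ∈ range m, f j : ℝ) : ℂ) := by
    rw [quadGauss_one_eq_prod, Complex.ofReal_prod]
    have hc : Complex.I ^ m = ∏ _j ∈ range m, Complex.I := by simp
    rw [hc, ← prod_mul_distrib]
    refine prod_congr rfl fun j _ ↦ ?_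
    simp only [f, hn]
    push_cast
    ring
  have hn0 : (0 : ℝ) < n := by positivity
  have hpos (j : ℕ) (hj : j < m - m / 2) : 0 ≤ f j := by
    refine mul_nonneg zero_le_two (Real.sin_nonneg_of_nonneg_of_le_pi (by positivity) ?_)
    rw [div_le_iff₀ hn0]
    have : (2 * (2 * j + 1 : ℕ) : ℝ) ≤ n := by
      exact_mod_cast (by omega : 2 * (2 * j + 1) ≤ n)
    nlinarith [Real.pi_pos]
  have hneg (j : ℕ) (hj : j < m / 2) : 0 ≤ -f (m - m / 2 + j) := by
    set c := 2 * (m - m / 2 + j) + 1 with hc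
    have h1 : (n : ℝ) ≤ 2 * (c : ℕ) := by exact_mod_cast (by omega : n ≤ 2 * c)
    have h2 : (c : ℝ) ≤ n := by exact_mod_cast (by omega : c ≤ n)
    have hs : 0 ≤ Real.sin (2 * Real.pi * c / n - Real.pi) := by
      apply Real.sin_nonneg_of_nonneg_of_le_pi
      · rw [sub_nonneg, le_div_iff₀ hn0]
        nlinarith [Real.pi_pos]
      · rw [sub_le_iff_le_add, div_le_iff₀ hn0]
        nlinarith [Real.pi_pos]
    rw [Real.sin_sub_pi] at hs
    simp only [f, ← hc]
    linarith
  refine ⟨(∏ j ∈ range (m - m / 2), f j) * ∏ j ∈ range (m / 2), -f (m - m / 2 + j),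
    mul_nonneg (prod_nonneg fun j hj ↦ hpos j (mem_range.mp hj))
      (prod_nonneg fun j hj ↦ hneg j (mem_range.mp hj)), ?_⟩
  have hsplit := prod_range_add f (m - m / 2) (m / 2)
  rw [Nat.sub_add_cancel (Nat.div_le_self m 2)] at hsplit
  rw [hG, hsplit, prod_neg, card_range]
  push_cast
  have hI : Complex.I ^ m = gaussEps n * (-1) ^ (m / 2) := by
    rw [gaussEps, hn]
    rcases Nat.even_or_odd' m with ⟨c, rfl | rfl⟩
    · rw [if_pos (by omega), pow_mul, Complex.I_sq, Nat.mul_div_cancel_left _ two_pos, one_mul]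
    · rw [if_neg (by omega), pow_succ, pow_mul, Complex.I_sq, show (2 * c + 1) / 2 = c by omega,
        mul_comm]
  rw [hI]
  ring

lemma gaussEps_mul_conj (n : ℕ) :
    gaussEps n * (starRingEnd ℂ) (gaussEps n) = 1 := by
  rw [gaussEps]
  split_ifs <;> simp

theorem quadGauss_one (n : ℕ) [NeZero n] (hn : Odd n) :
    quadGauss n 1 = gaussEps n * Real.sqrt n := by
  have hsq := quadGauss_one_mul_conj n hn
  obtain ⟨m, rfl⟩ := hn
  obtain ⟨P, hP, h⟩ := quadGauss_one_sign m
  rw [h] at hsq ⊢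
  rw [map_mul, Complex.conj_ofReal] at hsq
  have h2 : (P : ℂ) * P = (2 * m + 1 : ℕ) := by
    linear_combination hsq - P * P * gaussEps_mul_conj (2 * m + 1)
  have h3 : P ^ 2 = (2 * m + 1 : ℕ) := by
    rw [sq]
    exact_mod_cast h2
  rw [← h3, Real.sqrt_sq hP]

lemma stdAddChar_mul_intCast (a b : ℕ) [NeZero a] [NeZero b] (k : ℤ) :
    (stdAddChar ((a * k : ℤ) : ZMod (a * b)) : ℂ) = stdAddChar (k : ZMod b) := by
  have ha : (a : ℂ) ≠ 0 := NeZero.ne _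
  have hb : (b : ℂ) ≠ 0 := NeZero.ne _
  rw [stdAddChar_coe, stdAddChar_coe]
  congr 1
  push_cast
  field_simp

lemma quadGauss_natCast (a : ℕ) [NeZero a] (b : ℕ) :
    quadGauss a b = ∑ x ∈ range a, (stdAddChar (((b * x ^ 2 : ℕ) : ℤ) : ZMod a) : ℂ) := by
  rw [quadGauss, ← sum_range_natCast_zmod]
  push_cast
  rfl

theorem quadGauss_mul_quadGauss (a b : ℕ) [NeZero a] [NeZero b] (h : a.Coprime b) :
    quadGauss a b * quadGauss b a = quadGauss (a * b) 1 := by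
  rw [quadGauss_natCast, quadGauss_natCast, quadGauss, sum_mul_sum, ← sum_product']
  have hinj : Set.InjOn (fun p : ℕ × ℕ ↦ ((b * p.1 + a * p.2 : ℕ) : ZMod (a * b)))
      (range a ×ˢ range b : Finset (ℕ × ℕ)) := by
    rintro ⟨x, y⟩ hxy ⟨x', y'⟩ hxy' heq
    simp only [coe_product, Set.mem_prod, mem_coe, mem_range] at hxy hxy'
    have hmod := (ZMod.natCast_eq_natCast_iff _ _ _).mp heq
    have h1 : b * x ≡ b * x' [MOD a] := by
      have := hmod.of_mul_right b
      simpa [Nat.ModEq, Nat.add_mul_mod_self_left] using this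
    have h2 : a * y ≡ a * y' [MOD b] := by
      have := hmod.of_mul_left a
      simpa [Nat.ModEq, Nat.add_mul_mod_self_left] using this
    have h1' := Nat.ModEq.cancel_left_of_coprime h h1
    have h2' := Nat.ModEq.cancel_left_of_coprime h.symm h2
    exact Prod.ext (h1'.eq_of_lt_of_lt hxy.1 hxy'.1) (h2'.eq_of_lt_of_lt hxy.2 hxy'.2)
  have himg : (range a ×ˢ range b).image
      (fun p : ℕ × ℕ ↦ ((b * p.1 + a * p.2 : ℕ) : ZMod (a * b))) = univ := by
    rw [← card_eq_iff_eq_univ, card_image_of_injOn hinj, card_product, card_range, card_range,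
      ZMod.card]
  rw [← himg, sum_image hinj]
  refine sum_congr rfl fun p _ ↦ ?_
  rw [← stdAddChar_mul_intCast a b, ← stdAddChar_mul_intCast b a]
  have hswap (k : ℤ) : (stdAddChar (k : ZMod (b * a)) : ℂ) = stdAddChar (k : ZMod (a * b)) := by
    rw [stdAddChar_coe, stdAddChar_coe, mul_comm b a]
  rw [hswap, ← AddChar.map_add_eq_mul]
  congr 1
  have h0 : (a : ZMod (a * b)) * b = 0 := by exact_mod_cast ZMod.natCast_self (a * b)
  push_cast
  linear_combination -2 * (p.1 : ZMod (a * b)) * p.2 * h0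

lemma gaussEps_mul {a b : ℕ} (ha : Odd a) (hb : Odd b) :
    gaussEps (a * b) = gaussEps a * gaussEps b * (-1) ^ (a / 2 * (b / 2)) := by
  have hab := Nat.mul_mod a b 4
  have h_one {n : ℕ} (hn : n % 4 = 1) : (-1 : ℂ) ^ (n / 2) = 1 := by
    exact_mod_cast congrArg (Int.cast : ℤ → ℂ) (neg_one_pow_div_two_of_one_mod_four hn)
  have h_three {n : ℕ} (hn : n % 4 = 3) : (-1 : ℂ) ^ (n / 2) = -1 := by
    exact_mod_cast congrArg (Int.cast : ℤ → ℂ) (neg_one_pow_div_two_of_three_mod_four hn)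
  rw [pow_mul]
  rcases Nat.odd_mod_four_iff.mp (Nat.odd_iff.mp ha) with h1 | h1 <;>
  rcases Nat.odd_mod_four_iff.mp (Nat.odd_iff.mp hb) with h2 | h2 <;>
  simp [gaussEps, hab, h1, h2, h_one, h_three]

lemma gaussEps_ne_zero (n : ℕ) : gaussEps n ≠ 0 := by
  rw [gaussEps]
  split_ifs <;> simp

lemma conj_gaussEps {n : ℕ} (hn : Odd n) :
    (starRingEnd ℂ) (gaussEps n) = gaussEps n * (jacobiSym (-1) n : ℂ) := by
  rw [jacobiSym.at_neg_one hn]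
  rcases Nat.odd_mod_four_iff.mp (Nat.odd_iff.mp hn) with h | h
  · simp [gaussEps, h, χ₄_nat_one_mod_four h]
  · simp [gaussEps, h, χ₄_nat_three_mod_four h]

lemma quadGauss_neg_intCast {n : ℕ} [NeZero n] (hn : Odd n) (s : ℤ)
    (h : quadGauss n s = gaussEps n * Real.sqrt n * (jacobiSym s n : ℂ)) :
    quadGauss n (-s : ℤ) = gaussEps n * Real.sqrt n * (jacobiSym (-s) n : ℂ) := by
  rw [Int.cast_neg, ← conj_quadGauss, h, neg_eq_neg_one_mul s, jacobiSym.mul_left, map_mul,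
    map_mul, Complex.conj_ofReal, conj_gaussEps hn, map_intCast]
  push_cast
  ring

/-- Reciprocity step: the value of the Gauss sum modulo `r` determines the one modulo `n`. -/
lemma quadGauss_natCast_of_swap {n r : ℕ} [NeZero n] [NeZero r] (hn : Odd n) (hr : Odd r)
    (hc : r.Coprime n)
    (h : quadGauss r (n : ℤ) = gaussEps r * Real.sqrt r * (jacobiSym n r : ℂ)) :
    quadGauss n (r : ℤ) = gaussEps n * Real.sqrt n * (jacobiSym r n : ℂ) := by
  rw [Int.cast_natCast] at h ⊢
  have h2 := quadGauss_mul_quadGauss n r hc.symm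
  have hqr : (jacobiSym r n : ℂ) = (-1) ^ (n / 2 * (r / 2)) * (jacobiSym n r : ℂ) := by
    rw [jacobiSym.quadratic_reciprocity hr hn, mul_comm (r / 2)]
    push_cast
    rfl
  have hsq : (jacobiSym n r : ℂ) * (jacobiSym n r : ℂ) = 1 := by
    have := jacobiSym.sq_one (a := n) (b := r) (by simpa using hc.symm)
    rw [sq] at this
    exact_mod_cast this
  rw [quadGauss_one _ (hn.mul hr), gaussEps_mul hn hr, Nat.cast_mul,
    Real.sqrt_mul (Nat.cast_nonneg n), h] at h2
  have hr0 : (Real.sqrt r : ℂ) ≠ 0 := by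
    exact_mod_cast (Real.sqrt_pos.mpr (Nat.cast_pos.mpr hr.pos)).ne'
  rw [hqr]
  apply mul_right_cancel₀ (mul_ne_zero (gaussEps_ne_zero r) hr0)
  push_cast at h2
  linear_combination (jacobiSym n r : ℂ) * h2 -
    quadGauss n r * gaussEps r * Real.sqrt r * hsq

theorem quadGauss_intCast (n : ℕ) [NeZero n] (hn : Odd n) (s : ℤ) (hs : s.gcd n = 1) :
    quadGauss n s = gaussEps n * Real.sqrt n * (jacobiSym s n : ℂ) := by
  rename_i inst
  revert inst hn s
  induction n using Nat.strong_induction_on with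
  | _ n ih =>
  intro inst hn s hs
  have h_small (r : ℕ) (hr : Odd r) (hrn : r < n) (hc : r.Coprime n) :
      quadGauss n (r : ℤ) = gaussEps n * Real.sqrt n * (jacobiSym r n : ℂ) := by
    have : NeZero r := ⟨hr.pos.ne'⟩
    exact quadGauss_natCast_of_swap hn hr hc (ih r hrn hr n (by simpa using hc.symm))
  have hn0 : (0 : ℤ) < n := by exact_mod_cast hn.pos
  have hlt := Int.emod_lt_of_pos s hn0
  have hgcd : (s % n).gcd n = 1 := by rw [Int.gcd_emod, hs]
  rw [← ZMod.intCast_mod s n, jacobiSym.mod_left]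
  obtain ⟨r, hr⟩ := Int.eq_ofNat_of_zero_le (Int.emod_nonneg s hn0.ne')
  rw [hr] at hlt hgcd ⊢
  have hlt' : r < n := by exact_mod_cast hlt
  have hgcd' : r.Coprime n := by simpa using hgcd
  rcases Nat.even_or_odd r with he | ho
  · rcases Nat.eq_zero_or_pos r with rfl | hr0
    · obtain rfl : n = 1 := by simpa using hgcd'
      have h1 := quadGauss_one 1 hn
      rw [Subsingleton.elim (1 : ZMod 1) ((0 : ℕ) : ℤ)] at h1
      rw [h1, jacobiSym.one_right, Int.cast_one, mul_one]
    · have h := quadGauss_neg_intCast hn (n - r : ℕ)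
        (h_small (n - r) (Nat.Odd.sub_even hlt'.le hn he) (by omega)
          ((Nat.coprime_self_sub_left hlt'.le).mpr hgcd'))
      have hcast : -((n - r : ℕ) : ℤ) = r - n := by omega
      rw [hcast, jacobiSym.mod_left, Int.sub_emod_right, ← jacobiSym.mod_left] at h
      simpa using h
  · exact h_small r ho hlt' hgcd'

lemma e_intCast_div (n : ℕ) [NeZero n] (k : ℤ) :
    e ((k : ℝ) / n) = stdAddChar (k : ZMod n) := by
  rw [e, stdAddChar_coe]
  congr 1
  push_cast
  ring

theorem stmt_0 (q : ℕ) (hq0 : 0 < q) (hq : Odd q) (s t u : ℤ)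
    (hs : s ≠ 0) (ht : t ≠ 0) (hsq : Int.gcd s q = 1)
    (hu : (4 * s * u) % (q : ℤ) = 1) :
    ∑ b ∈ Finset.range q, e (((s * (b : ℤ) ^ 2 + t * (b : ℤ) : ℤ) : ℝ) / q) =
      (if q % 4 = 1 then (1 : ℂ) else Complex.I) * Real.sqrt q * (jacobiSym s q : ℂ) *
        e (((-(u * t ^ 2) : ℤ) : ℝ) / q) := by
  have : NeZero q := ⟨hq0.ne'⟩
  have hu' : 4 * (s : ZMod q) * u = 1 := by
    have h := ZMod.intCast_mod (4 * s * u) q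
    rw [hu] at h
    push_cast at h
    exact h.symm
  have key := sum_stdAddChar_quadratic q s t u hu'
  rw [quadGauss_intCast q hq s hsq,
    ← sum_range_natCast_zmod q fun x ↦ (stdAddChar ((s : ZMod q) * x ^ 2 + (t : ZMod q) * x) : ℂ)] at key
  simp only [e_intCast_div]
  push_cast
  exact key
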